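/- If rpl(T_i) = rpl(T_{i+1}) ≥ 2 and T_i can be derived from T_{i+1} by deleting a leaf and appending a leaf, then C(T_i, rpl(T_i)+1) can be derived from C(T_{i+1}, rpl(T_i)+1) by deleting a leaf and appending a leaf. -/

import Mathlib

/-- An ordered (plane) tree: a root together with the list of subtrees of its
children.  The children are listed **rightmost first** (so the head of the
list is the rightmost child). -/
inductive OTree : Type
  | node : List OTree → OTree

namespace OTree

-- Number of vertices of an ordered tree.
mutual
  def size : OTree → ℕ
    | .node ts => 1 + sizeAux ts
  def sizeAux : List OTree → ℕ
    | [] => 0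
    | t :: ts => size t + sizeAux ts
end

/-- `rpl T` is the number of edges of the rightmost path of `T`
(the path from the root that always follows the rightmost child). -/
def rpl : OTree → ℕ
  | .node [] => 0
  | .node (t :: _) => 1 + rpl t

/-- `p T` removes the rightmost leaf of `T` (the endpoint of the rightmost
path).  On the one-vertex tree it is the identity (junk value). -/
def p : OTree → OTree
  | .node [] => .node []
  | .node (.node [] :: ts) => .node ts
  | .node (.node (c :: cs) :: ts) => .node (p (.node (c :: cs)) :: ts)

/-- `C T i` appends a new leaf as the rightmost child of the vertex at
level `i` on the rightmost path of `T` (the root has level 1).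
Junk values are returned when `i = 0` or `i` exceeds `rpl T + 1`. -/
def C : OTree → ℕ → OTree
  | t, 0 => t
  | .node ts, 1 => .node (.node [] :: ts)
  | .node [], _ + 2 => .node []
  | .node (t :: ts), n + 2 => .node (C t (n + 1) :: ts)

/-- The number of children of the parent of the rightmost leaf
(junk value `0` on the one-vertex tree, which has no such parent). -/
def rmlParentDeg : OTree → ℕ
  | .node [] => 0
  | .node (.node [] :: ts) => ts.length + 1
  | .node (.node (c :: cs) :: _) => rmlParentDeg (.node (c :: cs))

/-- `T` has the pony-tail if the rightmost child of the root has exactly one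
child, which is a leaf. -/
def ponyTail : OTree → Prop
  | .node (.node [.node []] :: _) => True
  | _ => False

end OTree

/-- `AppendLeaf T T'` holds when `T'` is obtained from `T` by attaching one
new leaf to some vertex of `T`, at some position among its children. -/
inductive AppendLeaf : OTree → OTree → Prop
  | root (l r : List OTree) :
      AppendLeaf (.node (l ++ r)) (.node (l ++ OTree.node [] :: r))
  | child (l r : List OTree) (t t' : OTree) :
      AppendLeaf t t' → AppendLeaf (.node (l ++ t :: r)) (.node (l ++ t' :: r))

/-- `DelApp T T'` holds when `T'` can be obtained from `T` by deleting one
leaf and then appending one new leaf somewhere (delete-and-append a leaf). -/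
def DelApp (T T' : OTree) : Prop :=
  ∃ S : OTree, AppendLeaf S T ∧ AppendLeaf S T'

/-- `CopyingAt T T' j` : `T` is copying `T'` at level `j`, i.e. `T'` is
obtained from `T` by appending a new leaf which becomes the rightmost leaf of
`T'` (namely forming `C T j`, whose rightmost path has `j` edges) and then
removing some other leaf. -/
def CopyingAt (T T' : OTree) (j : ℕ) : Prop :=
  T ≠ T' ∧ 1 ≤ j ∧ j ≤ T.rpl + 1 ∧ T'.rpl = j ∧ AppendLeaf T' (T.C j)

/-- `T` is copying `T'`. -/
def Copying (T T' : OTree) : Prop := ∃ j : ℕ, CopyingAt T T' j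

/-!
Let `S` be the tree left after the deletion, so that `T₁` and `T₂` each arise from `S` by
appending a leaf. If appending the leaf keeps the length of the rightmost path, then the new leaf
may be assumed to lie off that path, so appending it commutes with `C · j`, and `S.C j` is a common
origin of `T₁.C j` and `T₂.C j`. Otherwise the new leaf ends the rightmost path, so its parent is
determined by the length of the new path; as these lengths agree, `T₁ = T₂`.
-/

namespace OTree

theorem rpl_node_cons (t : OTree) (ts : List OTree) : (node (t :: ts)).rpl = t.rpl + 1 := by
  rw [rpl, Nat.add_comm]

theorem C_node_cons_succ (t : OTree) (ts : List OTree) {j : ℕ} (hj : 1 ≤ j) :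
    (node (t :: ts)).C (j + 1) = node (t.C j :: ts) := by
  obtain ⟨i, rfl⟩ := Nat.exists_eq_add_of_le' hj
  rw [C]

theorem exists_eq_leaf_cons_of_rpl_eq_one {ts : List OTree} (h : (node ts).rpl = 1) :
    ∃ ts', ts = node [] :: ts' := by
  match ts with
  | [] => simp [rpl] at h
  | node [] :: ts' => exact ⟨ts', rfl⟩
  | node (_ :: _) :: _ => simp [rpl] at h

theorem appendLeaf_C (T : OTree) {j : ℕ} (hj : 1 ≤ j) (hjT : j ≤ T.rpl + 1) :
    AppendLeaf T (T.C j) := by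
  fun_induction C T j with
  | case1 => omega
  | case2 ts => exact .root [] ts
  | case3 => simp [rpl] at hjT
  | case4 t ts i ih =>
    rw [rpl_node_cons] at hjT
    exact .child [] ts _ _ (ih (by omega) (by omega))

end OTree

namespace AppendLeaf

open OTree

variable {S T : OTree}

theorem rpl_pos (h : AppendLeaf S T) : 0 < T.rpl := by
  cases h with
  | root l r => cases l <;> simp [rpl]
  | child l r t t' _ => cases l <;> simp [rpl]

theorem eq_C_of_rpl_ne (h : AppendLeaf S T) (hne : S.rpl ≠ T.rpl) : T = S.C T.rpl := by
  induction h with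
  | root l r =>
    cases l with
    | nil => simp [rpl, C]
    | cons a l => simp [rpl] at hne
  | child l r t t' h ih =>
    cases l with
    | nil =>
      simp only [List.nil_append, rpl_node_cons, ne_eq, Nat.add_right_cancel_iff] at hne ⊢
      rw [C_node_cons_succ t r h.rpl_pos, ← ih hne]
    | cons a l => simp [rpl] at hne

theorem C_one (h : AppendLeaf S T) : AppendLeaf (S.C 1) (T.C 1) := by
  cases h with
  | root l r => simpa only [C] using .root (node [] :: l) r
  | child l r t t' h => simpa only [C] using .child (node [] :: l) r t t' h

theorem C_of_rpl_eq (h : AppendLeaf S T) (heq : S.rpl = T.rpl) (j : ℕ) :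
    AppendLeaf (S.C j) (T.C j) := by
  induction h generalizing j with
  | root l r =>
    match j, l with
    | 0, l => simpa only [C] using .root l r
    | 1, l => exact (root l r).C_one
    | i + 2, a :: l => simpa only [C] using .root (a.C (i + 1) :: l) r
    | i + 2, [] =>
      -- The new leaf stands to the right of a leaf `u`, so `u` may be regarded as the new one.
      obtain ⟨r', rfl⟩ := exists_eq_leaf_cons_of_rpl_eq_one (by simpa [rpl] using heq)
      simpa only [C] using .root [(node []).C (i + 1)] r'
  | child l r t t' h ih =>
    match j, l with
    | 0, l => simpa only [C] using .child l r t t' h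
    | 1, l => exact (child l r t t' h).C_one
    | i + 2, a :: l => simpa only [C] using .child (a.C (i + 1) :: l) r t t' h
    | i + 2, [] =>
      have heq' : t.rpl = t'.rpl := by simpa [rpl] using heq
      simpa only [C] using .child [] r _ _ (ih heq' (i + 1))

end AppendLeaf

theorem stmt_13_general {T₁ T₂ : OTree} (heq : T₁.rpl = T₂.rpl) (h : DelApp T₂ T₁) {j : ℕ}
    (hj : 1 ≤ j) (hjT : j ≤ T₁.rpl + 1) : DelApp (T₂.C j) (T₁.C j) := by
  obtain ⟨S, h₂, h₁⟩ := h
  by_cases hS : S.rpl = T₁.rpl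
  · exact ⟨S.C j, h₂.C_of_rpl_eq (hS.trans heq) j, h₁.C_of_rpl_eq hS j⟩
  · have hT : T₂ = T₁ := by
      rw [h₂.eq_C_of_rpl_ne (heq ▸ hS), ← heq, ← h₁.eq_C_of_rpl_ne hS]
    subst hT
    exact ⟨T₂, T₂.appendLeaf_C hj hjT, T₂.appendLeaf_C hj hjT⟩

/-- If `rpl T₁ = rpl T₂ ≥ 2` and `T₁` can be derived from `T₂` by deleting a
leaf and appending a leaf, then `C T₁ (rpl T₁ + 1)` can be derived from
`C T₂ (rpl T₁ + 1)` by deleting a leaf and appending a leaf. -/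
theorem stmt_13 (T₁ T₂ : OTree) (heq : T₁.rpl = T₂.rpl) (h2 : 2 ≤ T₁.rpl)
    (h : DelApp T₂ T₁) :
    DelApp (T₂.C (T₁.rpl + 1)) (T₁.C (T₁.rpl + 1)) :=
  stmt_13_general heq h (Nat.le_add_left 1 _) le_rfl
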